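/- arXiv:1912.03725 — 3 statements merged into one kernel-verified Lean document; each statement's English description precedes it below -/
import Mathlib

section
/- Let gamma be a centered Gaussian measure on the real Hilbert space L^2([0,1]) with covariance operator C, which is a positive, self-adjoint, trace-class operator with eigenvalues lambda_1 >= lambda_2 >= ... >= 0 and corresponding orthonormal eigenfunctions. Then the pushforward of gamma under the map f -> ||f||^2 = Integral f(t)^2 dt equals the distribution of sum over k >= 1 of lambda_k * N_k^2, where N_1, N_2, ... are independent standard normal random variables (Karhunen-Loeve expansion of the squared norm of a Gaussian random element). -/
open MeasureTheory Filter Topology ProbabilityTheory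
open scoped ProbabilityTheory RealInnerProductSpace NNReal

/-- Lebesgue measure restricted to `[0,1]`. -/
noncomputable def leb01 : Measure ℝ := volume.restrict (Set.Icc (0 : ℝ) 1)

/-- The Hilbert space `L²([0,1])`. -/
noncomputable abbrev L2unit : Type := MeasureTheory.Lp ℝ 2 leb01

noncomputable instance : MeasurableSpace L2unit := borel L2unit
instance : BorelSpace L2unit := ⟨rfl⟩

/-- A centered Gaussian (Borel probability) measure on `L²([0,1])`: every pushforward
under a continuous linear functional is a centered real Gaussian. -/
def IsCenteredGaussianMeasure (γ : Measure L2unit) : Prop :=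
  IsProbabilityMeasure γ ∧
    ∀ L : L2unit →L[ℝ] ℝ, ∃ v : ℝ≥0, γ.map L = gaussianReal 0 v

/-!
Under a centered Gaussian measure the coordinates `⟪b k, f⟫` in an eigenbasis of the covariance
operator are jointly Gaussian and uncorrelated, hence independent centered Gaussians of variances
`lam k`. The sequence of coordinates is therefore distributed as `(√(lam k) * N k)ₖ`, and Parseval's
identity writes `‖f‖ ^ 2` as a measurable function of this sequence.
-/

lemma hasSum_sq_norm_inner_hilbertBasis {ι 𝕜 E : Type*} [RCLike 𝕜] [NormedAddCommGroup E]
    [InnerProductSpace 𝕜 E] (b : HilbertBasis ι 𝕜 E) (x : E) :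
    HasSum (fun i ↦ ‖inner 𝕜 (b i) x‖ ^ 2) (‖x‖ ^ 2) := by
  have h : HasSum (fun i ↦ ((‖inner 𝕜 (b i) x‖ ^ 2 : ℝ) : 𝕜)) ((‖x‖ ^ 2 : ℝ) : 𝕜) := by
    simpa only [inner_mul_symm_re_eq_norm, ← inner_conj_symm x (b _), RCLike.conj_mul,
      inner_self_eq_norm_sq_to_K, ← RCLike.ofReal_pow] using b.hasSum_inner_mul_inner x x
  exact RCLike.hasSum_ofReal 𝕜 |>.mp h

lemma measurableSet_summable {ι α E : Type*} [Countable ι] [MeasurableSpace α] [AddCommMonoid E]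
    [TopologicalSpace E] [TopologicalSpace.IsCompletelyPseudoMetrizableSpace E]
    [SecondCountableTopology E] [MeasurableSpace E] [OpensMeasurableSpace E] [MeasurableAdd₂ E]
    {f : ι → α → E} (hf : ∀ i, Measurable (f i)) : MeasurableSet {a | Summable fun i ↦ f i a} :=
  measurableSet_exists_tendsto (by fun_prop)

section GaussianProcess

variable {ι Ω Ω' : Type*} {mΩ : MeasurableSpace Ω} {mΩ' : MeasurableSpace Ω'}
  {P : Measure Ω} {Q : Measure Ω'} {X : ι → Ω → ℝ} {N : ι → Ω' → ℝ}

lemma hasLaw_sqrt_mul_of_hasLaw_gaussianReal_one {Y : Ω → ℝ} (hY : HasLaw Y (gaussianReal 0 1) P)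
    (v : ℝ≥0) : HasLaw (fun ω ↦ √v * Y ω) (gaussianReal 0 v) P := by
  have h := gaussianReal_const_mul hY √v
  have hv : NNReal.mk (√v ^ 2) (sq_nonneg _) = v := Subtype.ext (Real.sq_sqrt v.2)
  rwa [mul_zero, mul_one, hv] at h

lemma iIndepFun_of_isGaussianProcess_of_uncorrelated (hX : IsGaussianProcess X P)
    (huncorr : Pairwise fun i j ↦ cov[X i, X j; P] = 0) : iIndepFun X P :=
  iIndepFun_iff_finset.mpr fun I ↦ (hX.hasGaussianLaw I).iIndepFun_of_covariance_eq_zero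
    fun _ _ hij ↦ huncorr (Subtype.coe_ne_coe.mpr hij)

lemma identDistrib_sqrt_variance_mul_of_isGaussianProcess [Countable ι]
    (hX : IsGaussianProcess X P) (hmean : ∀ i, P[X i] = 0)
    (huncorr : Pairwise fun i j ↦ cov[X i, X j; P] = 0)
    (hN : ∀ i, HasLaw (N i) (gaussianReal 0 1) Q) (hNindep : iIndepFun N Q) :
    IdentDistrib (fun ω i ↦ X i ω) (fun ω i ↦ √Var[X i; P] * N i ω) P Q := by
  have hXlaw (i : ι) : HasLaw (X i) (gaussianReal 0 Var[X i; P].toNNReal) P :=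
    ⟨hX.aemeasurable i, by rw [(hX.hasGaussianLaw_eval i).map_eq_gaussianReal, hmean]⟩
  have hNlaw (i : ι) :
      HasLaw (fun ω ↦ √Var[X i; P] * N i ω) (gaussianReal 0 Var[X i; P].toNNReal) Q := by
    simpa only [Real.coe_toNNReal _ (variance_nonneg _ _)] using
      hasLaw_sqrt_mul_of_hasLaw_gaussianReal_one (hN i) Var[X i; P].toNNReal
  exact .pi (fun i ↦ (hXlaw i).identDistrib (hNlaw i))
    (iIndepFun_of_isGaussianProcess_of_uncorrelated hX huncorr)
    (hNindep.comp (fun i x ↦ √Var[X i; P] * x) fun _ ↦ measurable_const_mul _)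

lemma isGaussianProcess_strongDual {E : Type*} [NormedAddCommGroup E] [NormedSpace ℝ E]
    [MeasurableSpace E] [BorelSpace E] (γ : Measure E) [IsGaussian γ] (L : ι → StrongDual ℝ E) :
    IsGaussianProcess (fun i x ↦ L i x) γ where
  hasGaussianLaw I := ⟨isGaussian_map (ContinuousLinearMap.pi fun i : I ↦ L i)⟩

end GaussianProcess

section CovarianceOperator

variable {H : Type*} [NormedAddCommGroup H] [InnerProductSpace ℝ H] [MeasurableSpace H]
  [BorelSpace H] {γ : Measure H} [IsGaussian γ] {C : H →L[ℝ] H}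

lemma covariance_inner_eq_inner_covarianceOperator (hmean : ∀ L : StrongDual ℝ H, γ[L] = 0)
    (hcov : ∀ x y, ⟪C x, y⟫ = ∫ f, ⟪f, x⟫ * ⟪f, y⟫ ∂γ) (x y : H) :
    cov[fun f ↦ ⟪x, f⟫, fun f ↦ ⟪y, f⟫; γ] = ⟪C x, y⟫ := by
  have hcentered (z : H) : ∫ f, ⟪z, f⟫ ∂γ = 0 := hmean (innerSL ℝ z)
  have hmemLp (z : H) : MemLp (fun f ↦ ⟪z, f⟫) 2 γ :=
    IsGaussian.memLp_dual γ (innerSL ℝ z) 2 ENNReal.ofNat_ne_top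
  rw [covariance_eq_sub (hmemLp x) (hmemLp y), hcentered, zero_mul, sub_zero, hcov]
  simp only [Pi.mul_apply, real_inner_comm]

lemma covariance_inner_eigenvector_of_inner_eq_zero (hmean : ∀ L : StrongDual ℝ H, γ[L] = 0)
    (hcov : ∀ x y, ⟪C x, y⟫ = ∫ f, ⟪f, x⟫ * ⟪f, y⟫ ∂γ) {u v : H} {c : ℝ} (hu : C u = c • u)
    (huv : ⟪u, v⟫ = 0) : cov[fun f ↦ ⟪u, f⟫, fun f ↦ ⟪v, f⟫; γ] = 0 := by
  rw [covariance_inner_eq_inner_covarianceOperator hmean hcov, hu, real_inner_smul_left, huv,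
    mul_zero]

lemma variance_inner_unit_eigenvector (hmean : ∀ L : StrongDual ℝ H, γ[L] = 0)
    (hcov : ∀ x y, ⟪C x, y⟫ = ∫ f, ⟪f, x⟫ * ⟪f, y⟫ ∂γ) {u : H} {c : ℝ} (hu : C u = c • u)
    (hu_norm : ‖u‖ = 1) : Var[fun f ↦ ⟪u, f⟫; γ] = c := by
  rw [← covariance_self (by fun_prop), covariance_inner_eq_inner_covarianceOperator hmean hcov, hu,
    real_inner_smul_left, inner_self_eq_one_of_norm_eq_one hu_norm, mul_one]

variable {ι Ω : Type*} [Countable ι] {mΩ : MeasurableSpace Ω} {P : Measure Ω} {N : ι → Ω → ℝ}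
  {lam : ι → ℝ}

lemma identDistrib_inner_eigenvectors (hmean : ∀ L : StrongDual ℝ H, γ[L] = 0)
    (hcov : ∀ x y, ⟪C x, y⟫ = ∫ f, ⟪f, x⟫ * ⟪f, y⟫ ∂γ) {e : ι → H} (he : Orthonormal ℝ e)
    (heigen : ∀ k, C (e k) = lam k • e k)
    (hN : ∀ k, HasLaw (N k) (gaussianReal 0 1) P) (hNindep : iIndepFun N P) :
    IdentDistrib (fun f k ↦ ⟪e k, f⟫) (fun ω k ↦ √(lam k) * N k ω) γ P := by
  have hvar (k : ι) : Var[fun f ↦ ⟪e k, f⟫; γ] = lam k :=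
    variance_inner_unit_eigenvector hmean hcov (heigen k) (he.norm_eq_one k)
  have huncorr (i j : ι) (hij : i ≠ j) : cov[fun f ↦ ⟪e i, f⟫, fun f ↦ ⟪e j, f⟫; γ] = 0 :=
    covariance_inner_eigenvector_of_inner_eq_zero hmean hcov (heigen i) (he.inner_eq_zero hij)
  simpa only [innerSL_apply_apply, hvar] using identDistrib_sqrt_variance_mul_of_isGaussianProcess
    (isGaussianProcess_strongDual γ fun k ↦ innerSL ℝ (e k)) (fun k ↦ hmean _) huncorr hN hNindep

theorem karhunen_loeve_squared_norm_general (hmean : ∀ L : StrongDual ℝ H, γ[L] = 0)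
    (hcov : ∀ x y, ⟪C x, y⟫ = ∫ f, ⟪f, x⟫ * ⟪f, y⟫ ∂γ)
    (b : HilbertBasis ι ℝ H) (heigen : ∀ k, C (b k) = lam k • b k)
    (hN : ∀ k, HasLaw (N k) (gaussianReal 0 1) P) (hNindep : iIndepFun N P) :
    (∀ᵐ ω ∂P, Summable fun k ↦ lam k * N k ω ^ 2) ∧
      IdentDistrib (fun f ↦ ‖f‖ ^ 2) (fun ω ↦ ∑' k, lam k * N k ω ^ 2) γ P := by
  have hcoord := identDistrib_inner_eigenvectors hmean hcov b.orthonormal heigen hN hNindep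
  have hparseval (f : H) : HasSum (fun k ↦ ⟪b k, f⟫ ^ 2) (‖f‖ ^ 2) := by
    simpa only [Real.norm_eq_abs, sq_abs] using hasSum_sq_norm_inner_hilbertBasis b f
  have hlam_nonneg (k : ι) : 0 ≤ lam k :=
    variance_inner_unit_eigenvector hmean hcov (heigen k) (b.orthonormal.norm_eq_one k) ▸
      variance_nonneg _ _
  have hsq (ω : Ω) (k : ι) : (√(lam k) * N k ω) ^ 2 = lam k * N k ω ^ 2 := by
    rw [mul_pow, Real.sq_sqrt (hlam_nonneg k)]
  have hmeas (k : ι) : Measurable fun x : ι → ℝ ↦ x k ^ 2 := by fun_prop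
  constructor
  · simpa only [hsq] using hcoord.ae_snd
      (measurableSet_summable hmeas) (.of_forall fun f ↦ (hparseval f).summable)
  · simpa only [Function.comp_def, hsq, (hparseval _).tsum_eq] using
      hcoord.comp (Measurable.tsum (L := .unconditional ι) hmeas)

end CovarianceOperator

namespace IsCenteredGaussianMeasure

variable {γ : Measure L2unit}

lemma isGaussian (hγ : IsCenteredGaussianMeasure γ) : IsGaussian γ :=
  isGaussian_of_map_eq_gaussianReal fun L ↦ ⟨0, hγ.2 L⟩

lemma integral_strongDual_eq_zero (hγ : IsCenteredGaussianMeasure γ) (L : StrongDual ℝ L2unit) :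
    γ[L] = 0 := by
  obtain ⟨v, hv⟩ := hγ.2 L
  have hlaw : HasLaw L (gaussianReal 0 v) γ := ⟨by fun_prop, hv⟩
  rw [hlaw.integral_eq, integral_id_gaussianReal]

end IsCenteredGaussianMeasure

/-- **Karhunen–Loève expansion of the squared norm.**
If `γ` is a centered Gaussian measure on `L²([0,1])` with positive, self-adjoint,
trace-class covariance operator `C` having eigenvalues `λ₁ ≥ λ₂ ≥ ⋯ ≥ 0` with
corresponding orthonormal basis of eigenfunctions `b`, then the pushforward of `γ`
under `f ↦ ‖f‖²` is the distribution of `∑ₖ λₖ Nₖ²` for i.i.d. standard normals `Nₖ`. -/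
theorem karhunen_loeve_squared_norm
    (γ : Measure L2unit) (hγ : IsCenteredGaussianMeasure γ)
    (C : L2unit →L[ℝ] L2unit)
    (hcov : ∀ x y : L2unit, ⟪C x, y⟫ = ∫ f, ⟪f, x⟫ * ⟪f, y⟫ ∂γ)
    (hpos : ∀ x : L2unit, 0 ≤ ⟪C x, x⟫)
    (hselfadj : ∀ x y : L2unit, ⟪C x, y⟫ = ⟪x, C y⟫)
    (lam : ℕ → ℝ) (hlam_nonneg : ∀ k, 0 ≤ lam k) (hlam_mono : Antitone lam)
    (hlam_summable : Summable lam)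
    (b : HilbertBasis ℕ ℝ L2unit) (heigen : ∀ k, C (b k) = lam k • b k)
    {Ω : Type*} [MeasureSpace Ω] [IsProbabilityMeasure (ℙ : Measure Ω)]
    (N : ℕ → Ω → ℝ) (hNmeas : ∀ k, Measurable (N k))
    (hNindep : iIndepFun N (ℙ : Measure Ω))
    (hNgauss : ∀ k, (ℙ : Measure Ω).map (N k) = gaussianReal 0 1) :
    γ.map (fun f : L2unit => ‖f‖ ^ 2) =
      (ℙ : Measure Ω).map (fun ω => ∑' k, lam k * (N k ω) ^ 2) := by
  have := hγ.isGaussian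
  exact (karhunen_loeve_squared_norm_general hγ.integral_strongDual_eq_zero hcov b heigen
    (fun k ↦ ⟨(hNmeas k).aemeasurable, hNgauss k⟩) hNindep).2.map_eq
end

section
/- Let (Y_i, X_i), i = 1, 2, ..., be i.i.d. copies of (Y, X), where Y is a real random variable with atomless distribution and X is a random element of L^2([0,1]). Fix t in [0,1] such that the distribution of X(t) is atomless. Define V_i(t) = E[ 1{(y - Y)(x(t) - X(t)) > 0} ] evaluated at (y, x) = (Y_i, X_i), minus 0.5, and W_i(t) = n^{-1} * sum over j = 1..n of 1{(Y_i - Y_j)(X_i(t) - X_j(t)) > 0} - 0.5. Then max over 1 <= i <= n of |V_i(t) - W_i(t)| converges to 0 almost surely as n tends to infinity. -/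
open MeasureTheory Filter Topology ProbabilityTheory
open scoped ProbabilityTheory

/-- The concordance indicator `1{a * b > 0}` (as a real number). -/
noncomputable def concord (a b : ℝ) : ℝ := if 0 < a * b then 1 else 0

/-! The functions `(u, v) ↦ concord (a - u) (b - v)`, indexed by `(a, b) ∈ ℝ × ℝ`, form a
Glivenko–Cantelli class for every probability measure on the plane. Given `ε`, the line splits into
finitely many intervals, each of which is a singleton or has mass less than `ε` under the first
marginal, and likewise for the second. While `a` and `b` stay in fixed intervals, the function
changes only at points with a coordinate in the corresponding non-degenerate interval, so finitely
many brackets of small integral cover the whole class, and the strong law of large numbers at the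
ends of the brackets is uniform over it. -/

section Bracketing

variable {Ω S ι : Type*} {mΩ : MeasurableSpace Ω} {mS : MeasurableSpace S} {μ : Measure Ω}

/-- The family `F` has finite bracketing numbers in `L¹(ν)`: for every `ε > 0` it is covered by
finitely many brackets `[l, u]` of integrable functions with `∫ u - ∫ l < ε`. A bracket is encoded
as the pair `(l, u)`. -/
def HasFiniteBracketing (F : ι → S → ℝ) (ν : Measure S) : Prop :=
  ∀ ε > 0, ∃ B : Set ((S → ℝ) × (S → ℝ)), B.Finite ∧
    (∀ b ∈ B, Integrable b.1 ν ∧ Integrable b.2 ν ∧ ∫ z, b.2 z ∂ν - ∫ z, b.1 z ∂ν < ε) ∧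
    ∀ i, ∃ b ∈ B, F i ∈ Set.Icc b.1 b.2

lemma hasFiniteBracketing_of_abs_sub_le {F : ι → S → ℝ} {ν : Measure S}
    (h : ∀ ε > 0, ∃ B : Set ((S → ℝ) × (S → ℝ)), B.Finite ∧
      (∀ b ∈ B, Integrable b.1 ν ∧ Integrable b.2 ν ∧ ∫ z, b.2 z ∂ν < ε) ∧
      ∀ i, ∃ b ∈ B, ∀ z, |F i z - b.1 z| ≤ b.2 z) :
    HasFiniteBracketing F ν := by
  intro ε hε
  obtain ⟨B, hB, hsmall, hclose⟩ := h (ε / 2) (half_pos hε)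
  refine ⟨(fun b => (b.1 - b.2, b.1 + b.2)) '' B, hB.image _, Set.forall_mem_image.2 ?_, ?_⟩
  · rintro ⟨f, d⟩ hb
    obtain ⟨hf, hd, hd_lt⟩ := hsmall _ hb
    refine ⟨hf.sub hd, hf.add hd, ?_⟩
    rw [integral_add' hf hd, integral_sub' hf hd]
    linarith
  · intro i
    obtain ⟨b, hb, hi⟩ := hclose i
    exact ⟨_, Set.mem_image_of_mem _ hb, fun z => sub_le_of_abs_sub_le_left (hi z),
      fun z => sub_le_iff_le_add'.1 (abs_le.1 (hi z)).2⟩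

lemma ae_tendsto_average_comp {Z : ℕ → Ω → S} (hindep : Pairwise fun i j => Z i ⟂ᵢ[μ] Z j)
    (hident : ∀ i, IdentDistrib (Z i) (Z 0) μ μ) {f : S → ℝ} (hf : Integrable f (μ.map (Z 0))) :
    ∀ᵐ ω ∂μ, Tendsto (fun n : ℕ => (n : ℝ)⁻¹ * ∑ j ∈ Finset.range n, f (Z j ω)) atTop
      (𝓝 (∫ z, f z ∂μ.map (Z 0))) := by
  have hZ (i : ℕ) : AEMeasurable (Z i) μ := (hident i).aemeasurable_fst
  have hfZ (i : ℕ) : AEMeasurable f (μ.map (Z i)) := (hident i).map_eq ▸ hf.aemeasurable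
  rw [integral_map (hZ 0) hf.aestronglyMeasurable]
  exact strong_law_ae (fun i => f ∘ Z i) (hf.comp_aemeasurable (hZ 0))
    (fun i j hij => (hindep hij).comp₀ (hZ i) (hZ j) (hfZ i) (hfZ j))
    (fun i => (hident i).comp_of_aemeasurable (hfZ i))

namespace HasFiniteBracketing

variable {F : ι → S → ℝ} {Z : ℕ → Ω → S}

lemma ae_eventually_abs_average_sub_integral_lt (hF : HasFiniteBracketing F (μ.map (Z 0)))
    (hint : ∀ i, Integrable (F i) (μ.map (Z 0))) (hindep : Pairwise fun i j => Z i ⟂ᵢ[μ] Z j)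
    (hident : ∀ i, IdentDistrib (Z i) (Z 0) μ μ) {ε : ℝ} (hε : 0 < ε) :
    ∀ᵐ ω ∂μ, ∀ᶠ n : ℕ in atTop, ∀ i,
      |(n : ℝ)⁻¹ * ∑ j ∈ Finset.range n, F i (Z j ω) - ∫ z, F i z ∂μ.map (Z 0)| < ε := by
  obtain ⟨B, hB, hbracket, hcover⟩ := hF (ε / 2) (half_pos hε)
  have hlower : ∀ᵐ ω ∂μ, ∀ b ∈ B, Tendsto
      (fun n : ℕ => (n : ℝ)⁻¹ * ∑ j ∈ Finset.range n, b.1 (Z j ω)) atTop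
      (𝓝 (∫ z, b.1 z ∂μ.map (Z 0))) :=
    (ae_ball_iff hB.countable).2 fun b hb =>
      ae_tendsto_average_comp hindep hident (hbracket b hb).1
  have hupper : ∀ᵐ ω ∂μ, ∀ b ∈ B, Tendsto
      (fun n : ℕ => (n : ℝ)⁻¹ * ∑ j ∈ Finset.range n, b.2 (Z j ω)) atTop
      (𝓝 (∫ z, b.2 z ∂μ.map (Z 0))) :=
    (ae_ball_iff hB.countable).2 fun b hb =>
      ae_tendsto_average_comp hindep hident (hbracket b hb).2.1
  filter_upwards [hlower, hupper] with ω hl hu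
  have hl_near := (eventually_all_finite hB).2 fun b hb =>
    (hl b hb).eventually_const_lt (sub_lt_self _ (half_pos hε))
  have hu_near := (eventually_all_finite hB).2 fun b hb =>
    (hu b hb).eventually_lt_const (lt_add_of_pos_right _ (half_pos hε))
  filter_upwards [hl_near, hu_near] with n hln hun i
  obtain ⟨b, hb, hbi⟩ := hcover i
  obtain ⟨hl_int, hu_int, hwidth⟩ := hbracket b hb
  have hl_mean : (n : ℝ)⁻¹ * ∑ j ∈ Finset.range n, b.1 (Z j ω) ≤
      (n : ℝ)⁻¹ * ∑ j ∈ Finset.range n, F i (Z j ω) := by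
    gcongr
    exact hbi.1 _
  have hu_mean : (n : ℝ)⁻¹ * ∑ j ∈ Finset.range n, F i (Z j ω) ≤
      (n : ℝ)⁻¹ * ∑ j ∈ Finset.range n, b.2 (Z j ω) := by
    gcongr
    exact hbi.2 _
  have hl_integral := integral_mono hl_int (hint i) hbi.1
  have hu_integral := integral_mono (hint i) hu_int hbi.2
  exact abs_lt.2 ⟨by linarith [hln b hb], by linarith [hun b hb]⟩

theorem ae_tendstoUniformly_average (hF : HasFiniteBracketing F (μ.map (Z 0)))
    (hint : ∀ i, Integrable (F i) (μ.map (Z 0))) (hindep : Pairwise fun i j => Z i ⟂ᵢ[μ] Z j)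
    (hident : ∀ i, IdentDistrib (Z i) (Z 0) μ μ) :
    ∀ᵐ ω ∂μ, TendstoUniformly
      (fun (n : ℕ) i => (n : ℝ)⁻¹ * ∑ j ∈ Finset.range n, F i (Z j ω))
      (fun i => ∫ z, F i z ∂μ.map (Z 0)) atTop := by
  have hclose := ae_all_iff.2 fun k : ℕ =>
    hF.ae_eventually_abs_average_sub_integral_lt hint hindep hident
      (Nat.one_div_pos_of_nat (α := ℝ) (n := k))
  filter_upwards [hclose] with ω hω
  refine Metric.tendstoUniformly_iff.2 fun ε hε => ?_
  obtain ⟨k, hk⟩ := exists_nat_one_div_lt hε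
  filter_upwards [hω k] with n hn i
  rw [dist_comm, Real.dist_eq]
  exact (hn i).trans hk

end HasFiniteBracketing

end Bracketing

section FiniteNet

variable {α : Type*} [LinearOrder α]

lemma cmp_eq_cmp_of_notMem_ordConnected {C : Set α} (hC : C.OrdConnected) {a b u : α}
    (ha : a ∈ C) (hb : b ∈ C) (hu : u ∉ C) : cmp a u = cmp b u := by
  rcases lt_trichotomy a u with hau | rfl | hua
  · have hbu : b < u := lt_of_not_ge fun hub => hu (hC.out ha hb ⟨hau.le, hub⟩)
    rw [(cmp_eq_lt_iff _ _).2 hau, (cmp_eq_lt_iff _ _).2 hbu]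
  · exact absurd ha hu
  · have hub : u < b := lt_of_not_ge fun hbu => hu (hC.out hb ha ⟨hbu, hua.le⟩)
    rw [(cmp_eq_gt_iff _ _).2 hua, (cmp_eq_gt_iff _ _).2 hub]

variable [TopologicalSpace α] [OrderTopology α] [MeasurableSpace α]

lemma exists_mem_nhds_ordConnected_measure_sdiff_singleton_lt [MeasurableSingletonClass α]
    (ν : Measure α) [IsFiniteMeasure ν] [ν.OuterRegular] (y : α) {ε : ENNReal} (hε : ε ≠ 0) :
    ∃ I ∈ 𝓝 y, I.OrdConnected ∧ ν (I \ {y}) < ε := by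
  obtain ⟨U, hyU, hU, -, hlt⟩ :=
    (measurableSet_singleton y).exists_isOpen_sdiff_lt (measure_ne_top ν {y}) hε
  have hUy : U ∈ 𝓝 y := hU.mem_nhds (hyU rfl)
  refine ⟨U.ordConnectedComponent y, Set.ordConnectedComponent_mem_nhds.2 hUy, inferInstance, ?_⟩
  exact (measure_mono (Set.sdiff_subset_sdiff_left Set.ordConnectedComponent_subset)).trans_lt hlt

lemma exists_finite_ordConnected_cover_of_compactSpace [CompactSpace α]
    [MeasurableSingletonClass α] (ν : Measure α) [IsFiniteMeasure ν] [ν.OuterRegular]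
    {ε : ENNReal} (hε : ε ≠ 0) :
    ∃ 𝒞 : Set (Set α), 𝒞.Finite ∧ ⋃₀ 𝒞 = Set.univ ∧
      ∀ C ∈ 𝒞, C.OrdConnected ∧ (C.Subsingleton ∨ ν C < ε) := by
  choose I hI_nhds hI_conn hI_meas using fun y =>
    exists_mem_nhds_ordConnected_measure_sdiff_singleton_lt ν y hε
  obtain ⟨T, hT⟩ := CompactSpace.elim_nhds_subcover I hI_nhds
  refine ⟨⋃ y ∈ T, {I y ∩ Set.Iio y, {y}, I y ∩ Set.Ioi y},
    T.finite_toSet.biUnion fun y _ => Set.toFinite _, ?_, ?_⟩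
  · refine Set.eq_univ_of_forall fun x => ?_
    obtain ⟨y, hy, hxy⟩ := Set.mem_iUnion₂.1 (hT.ge (Set.mem_univ x))
    rcases lt_trichotomy x y with hlt | rfl | hgt
    · exact ⟨I y ∩ Set.Iio y, Set.mem_biUnion hy (by simp), hxy, hlt⟩
    · exact ⟨{x}, Set.mem_biUnion hy (by simp), rfl⟩
    · exact ⟨I y ∩ Set.Ioi y, Set.mem_biUnion hy (by simp), hxy, hgt⟩
  · intro C hC
    obtain ⟨y, -, rfl | rfl | rfl⟩ := Set.mem_iUnion₂.1 hC
    · refine ⟨(hI_conn y).inter Set.ordConnected_Iio, .inr ?_⟩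
      exact (measure_mono fun x hx => And.intro hx.1 hx.2.ne).trans_lt (hI_meas y)
    · exact ⟨Set.ordConnected_singleton, .inl Set.subsingleton_singleton⟩
    · refine ⟨(hI_conn y).inter Set.ordConnected_Ioi, .inr ?_⟩
      exact (measure_mono fun x hx => And.intro hx.1 hx.2.ne').trans_lt (hI_meas y)

lemma exists_finite_ordConnected_cover_real (ν : Measure ℝ) [IsFiniteMeasure ν]
    {ε : ENNReal} (hε : ε ≠ 0) :
    ∃ 𝒞 : Set (Set ℝ), 𝒞.Finite ∧ ⋃₀ 𝒞 = Set.univ ∧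
      ∀ C ∈ 𝒞, C.OrdConnected ∧ (C.Subsingleton ∨ ν C < ε) := by
  obtain ⟨𝒞, hfin, hcover, hcell⟩ :=
    exists_finite_ordConnected_cover_of_compactSpace (ν.map Real.toEReal) hε
  refine ⟨Set.preimage Real.toEReal '' 𝒞, hfin.image _, ?_, ?_⟩
  · rw [Set.sUnion_image, ← Set.preimage_sUnion, hcover, Set.preimage_univ]
  · rintro _ ⟨C, hC, rfl⟩
    refine ⟨(hcell C hC).1.preimage_mono EReal.coe_strictMono.monotone, ?_⟩
    refine (hcell C hC).2.imp (·.preimage EReal.coe_injective) fun hlt => ?_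
    exact (Measure.le_map_apply measurable_coe_real_ereal.aemeasurable C).trans_lt hlt

/-- A member of `T` is a threshold together with its exceptional set. -/
lemma exists_finite_net_cmp (ν : Measure ℝ) [IsFiniteMeasure ν] {ε : ℝ} (hε : 0 < ε) :
    ∃ T : Set (ℝ × Set ℝ), T.Finite ∧ (∀ p ∈ T, MeasurableSet p.2 ∧ ν.real p.2 < ε) ∧
      ∀ a, ∃ p ∈ T, ∀ u ∉ p.2, cmp a u = cmp p.1 u := by
  obtain ⟨𝒞, hfin, hcover, hcell⟩ :=
    exists_finite_ordConnected_cover_real ν (ENNReal.ofReal_pos.2 hε).ne'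
  have hnet (C) (hC : C ∈ 𝒞) : ∃ p : ℝ × Set ℝ, (MeasurableSet p.2 ∧ ν.real p.2 < ε) ∧
      ∀ a ∈ C, ∀ u ∉ p.2, cmp a u = cmp p.1 u := by
    obtain ⟨hconn, hsub | hlt⟩ := hcell C hC
    all_goals rcases C.eq_empty_or_nonempty with rfl | ⟨c, hc⟩
    · exact ⟨(0, ∅), by simpa using hε, by simp⟩
    · exact ⟨(c, ∅), by simpa using hε, fun a ha u _ => by rw [hsub ha hc]⟩
    · exact ⟨(0, ∅), by simpa using hε, by simp⟩
    · exact ⟨(c, C), ⟨hconn.measurableSet, ENNReal.toReal_lt_of_lt_ofReal hlt⟩,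
        fun a ha u hu => cmp_eq_cmp_of_notMem_ordConnected hconn ha hc hu⟩
  choose! p hp_small hp_cmp using hnet
  refine ⟨p '' 𝒞, hfin.image p, Set.forall_mem_image.2 hp_small, fun a => ?_⟩
  obtain ⟨C, hC, ha⟩ := hcover.ge (Set.mem_univ a)
  exact ⟨p C, Set.mem_image_of_mem p hC, hp_cmp C hC a ha⟩

end FiniteNet

section Concord

lemma concord_nonneg (a b : ℝ) : 0 ≤ concord a b := by
  unfold concord
  split_ifs <;> norm_num

lemma concord_le_one (a b : ℝ) : concord a b ≤ 1 := by
  unfold concord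
  split_ifs <;> norm_num

lemma measurable_concord_sub (p : ℝ × ℝ) :
    Measurable fun z : ℝ × ℝ => concord (p.1 - z.1) (p.2 - z.2) :=
  .ite (measurableSet_lt measurable_const (by fun_prop)) measurable_const measurable_const

lemma integrable_concord_sub (p : ℝ × ℝ) (ν : Measure (ℝ × ℝ)) [IsFiniteMeasure ν] :
    Integrable (fun z : ℝ × ℝ => concord (p.1 - z.1) (p.2 - z.2)) ν :=
  .of_bound (measurable_concord_sub p).aestronglyMeasurable 1 <| .of_forall fun _ => by
    rw [Real.norm_of_nonneg (concord_nonneg _ _)]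
    exact concord_le_one _ _

lemma concord_sub_eq_of_cmp_eq {a a' b b' u v : ℝ} (ha : cmp a u = cmp a' u)
    (hb : cmp b v = cmp b' v) : concord (a - u) (b - v) = concord (a' - u) (b' - v) := by
  simp only [concord, mul_pos_iff, sub_pos, sub_neg, lt_iff_lt_of_cmp_eq_cmp ha,
    lt_iff_lt_of_cmp_eq_cmp hb, lt_iff_lt_of_cmp_eq_cmp (cmp_eq_cmp_symm.1 ha),
    lt_iff_lt_of_cmp_eq_cmp (cmp_eq_cmp_symm.1 hb)]

lemma abs_concord_sub_le_indicator {p q : ℝ × ℝ} {M N : Set ℝ}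
    (hM : ∀ u ∉ M, cmp q.1 u = cmp p.1 u) (hN : ∀ v ∉ N, cmp q.2 v = cmp p.2 v) (z : ℝ × ℝ) :
    |concord (q.1 - z.1) (q.2 - z.2) - concord (p.1 - z.1) (p.2 - z.2)| ≤
      (Prod.fst ⁻¹' M ∪ Prod.snd ⁻¹' N).indicator 1 z := by
  by_cases hz : z ∈ Prod.fst ⁻¹' M ∪ Prod.snd ⁻¹' N
  · rw [Set.indicator_of_mem hz, Pi.one_apply]
    exact abs_sub_le_of_nonneg_of_le (concord_nonneg _ _) (concord_le_one _ _)
      (concord_nonneg _ _) (concord_le_one _ _)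
  · obtain ⟨hzM, hzN⟩ := not_or.1 hz
    rw [Set.indicator_of_notMem hz, concord_sub_eq_of_cmp_eq (hM _ hzM) (hN _ hzN), sub_self,
      abs_zero]

lemma measureReal_preimage_fst_union_preimage_snd_le {S T : Type*} [MeasurableSpace S]
    [MeasurableSpace T] (ν : Measure (S × T)) {M : Set S} {N : Set T} (hM : MeasurableSet M)
    (hN : MeasurableSet N) :
    ν.real (Prod.fst ⁻¹' M ∪ Prod.snd ⁻¹' N) ≤ ν.fst.real M + ν.snd.real N := by
  simpa only [Measure.real, Measure.fst_apply hM, Measure.snd_apply hN] using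
    measureReal_union_le (μ := ν) (Prod.fst ⁻¹' M) (Prod.snd ⁻¹' N)

lemma hasFiniteBracketing_concord_sub (ν : Measure (ℝ × ℝ)) [IsFiniteMeasure ν] :
    HasFiniteBracketing (fun p z : ℝ × ℝ => concord (p.1 - z.1) (p.2 - z.2)) ν := by
  refine hasFiniteBracketing_of_abs_sub_le fun ε hε => ?_
  obtain ⟨S, hS_fin, hS_small, hS_cmp⟩ := exists_finite_net_cmp ν.fst (half_pos hε)
  obtain ⟨T, hT_fin, hT_small, hT_cmp⟩ := exists_finite_net_cmp ν.snd (half_pos hε)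
  refine ⟨(fun r : (ℝ × Set ℝ) × (ℝ × Set ℝ) =>
      (fun z => concord (r.1.1 - z.1) (r.2.1 - z.2),
        (Prod.fst ⁻¹' r.1.2 ∪ Prod.snd ⁻¹' r.2.2).indicator 1)) '' S ×ˢ T,
    (hS_fin.prod hT_fin).image _, Set.forall_mem_image.2 ?_, ?_⟩
  · rintro ⟨⟨a, M⟩, b, N⟩ ⟨hM, hN⟩
    obtain ⟨hM_meas, hM_lt⟩ := hS_small _ hM
    obtain ⟨hN_meas, hN_lt⟩ := hT_small _ hN
    have hMN_meas : MeasurableSet (Prod.fst ⁻¹' M ∪ Prod.snd ⁻¹' N) :=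
      (measurable_fst hM_meas).union (measurable_snd hN_meas)
    refine ⟨integrable_concord_sub (a, b) ν, (integrable_const 1).indicator hMN_meas, ?_⟩
    calc ∫ z, (Prod.fst ⁻¹' M ∪ Prod.snd ⁻¹' N).indicator 1 z ∂ν
        = ν.real (Prod.fst ⁻¹' M ∪ Prod.snd ⁻¹' N) := integral_indicator_one hMN_meas
      _ ≤ ν.fst.real M + ν.snd.real N :=
        measureReal_preimage_fst_union_preimage_snd_le ν hM_meas hN_meas
      _ < ε / 2 + ε / 2 := add_lt_add hM_lt hN_lt
      _ = ε := add_halves ε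
  · rintro ⟨a, b⟩
    obtain ⟨⟨c, M⟩, hM, hM_cmp⟩ := hS_cmp a
    obtain ⟨⟨d, N⟩, hN, hN_cmp⟩ := hT_cmp b
    exact ⟨_, Set.mem_image_of_mem _ (Set.mk_mem_prod hM hN),
      abs_concord_sub_le_indicator (p := (c, d)) (q := (a, b)) hM_cmp hN_cmp⟩

theorem ae_tendstoUniformly_average_concord_sub {Ω : Type*} {mΩ : MeasurableSpace Ω}
    {μ : Measure Ω} [IsFiniteMeasure μ] {Z : ℕ → Ω → ℝ × ℝ}
    (hindep : Pairwise fun i j => Z i ⟂ᵢ[μ] Z j) (hident : ∀ i, IdentDistrib (Z i) (Z 0) μ μ) :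
    ∀ᵐ ω ∂μ, TendstoUniformly
      (fun (n : ℕ) (p : ℝ × ℝ) => (n : ℝ)⁻¹ *
        ∑ j ∈ Finset.range n, concord (p.1 - (Z j ω).1) (p.2 - (Z j ω).2))
      (fun p => ∫ ω', concord (p.1 - (Z 0 ω').1) (p.2 - (Z 0 ω').2) ∂μ) atTop := by
  have hlim (p : ℝ × ℝ) : ∫ z, concord (p.1 - z.1) (p.2 - z.2) ∂μ.map (Z 0) =
      ∫ ω', concord (p.1 - (Z 0 ω').1) (p.2 - (Z 0 ω').2) ∂μ :=
    integral_map (hident 0).aemeasurable_fst (measurable_concord_sub p).aestronglyMeasurable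
  simpa only [hlim] using
    (hasFiniteBracketing_concord_sub (μ.map (Z 0))).ae_tendstoUniformly_average
      (fun p => integrable_concord_sub p _) hindep hident

end Concord

lemma tendsto_biSup_abs_sub_of_tendstoUniformly {ι : Type*} {F : ℕ → ι → ℝ} {f : ι → ℝ}
    (h : TendstoUniformly F f atTop) (s : ℕ → Finset ι) :
    Tendsto (fun n => ⨆ i ∈ s n, |f i - F n i|) atTop (𝓝 0) := by
  refine Metric.tendsto_nhds.2 fun ε hε => ?_
  filter_upwards [Metric.tendstoUniformly_iff.1 h (ε / 2) (half_pos hε)] with n hn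
  have hnonneg : 0 ≤ ⨆ i ∈ s n, |f i - F n i| :=
    Real.iSup_nonneg fun i => Real.iSup_nonneg fun _ => abs_nonneg _
  have hle : ⨆ i ∈ s n, |f i - F n i| ≤ ε / 2 :=
    Real.iSup_le (fun i => Real.iSup_le (fun _ => (hn i).le) (half_pos hε).le) (half_pos hε).le
  rw [Real.dist_0_eq_abs, abs_of_nonneg hnonneg]
  exact hle.trans_lt (half_lt_self hε)

theorem sup_abs_V_sub_W_tendsto_zero_ae_general
    {Ω : Type*} {mΩ : MeasurableSpace Ω} {μ : Measure Ω} [IsFiniteMeasure μ] {Y X : ℕ → Ω → ℝ}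
    (hindep : Pairwise fun i j => (fun ω => (Y i ω, X i ω)) ⟂ᵢ[μ] (fun ω => (Y j ω, X j ω)))
    (hident : ∀ i, IdentDistrib (fun ω => (Y i ω, X i ω)) (fun ω => (Y 0 ω, X 0 ω)) μ μ)
    {V : ℕ → Ω → ℝ}
    (hV : ∀ i ω, V i ω = (∫ ω', concord (Y i ω - Y 0 ω') (X i ω - X 0 ω') ∂μ) - 0.5)
    {W : ℕ → ℕ → Ω → ℝ}
    (hW : ∀ n i ω, W n i ω =
      (n : ℝ)⁻¹ * ∑ j ∈ Finset.range n, concord (Y i ω - Y j ω) (X i ω - X j ω) - 0.5) :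
    ∀ᵐ ω ∂μ, Tendsto (fun n => ⨆ i ∈ Finset.range n, |V i ω - W n i ω|) atTop (𝓝 0) := by
  filter_upwards [ae_tendstoUniformly_average_concord_sub hindep hident] with ω hω
  simp only [hV, hW, sub_sub_sub_cancel_right]
  exact tendsto_biSup_abs_sub_of_tendstoUniformly
    (hω.comp fun i => (Y i ω, X i ω)) Finset.range

/-- Fix `t ∈ [0,1]`. Let `V i (t)` be the conditional concordance
probability given `(Y i, X i)` (centered by `0.5`) and `W n i (t)` its empirical
counterpart.  Then `max_{1 ≤ i ≤ n} |V i (t) - W n i (t)| → 0` almost surely. -/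
theorem sup_abs_V_sub_W_tendsto_zero_ae
    {Ω : Type*} [MeasureSpace Ω] [IsProbabilityMeasure (ℙ : Measure Ω)]
    (Y : ℕ → Ω → ℝ) (X : ℕ → Ω → ℝ → ℝ)
    (hYmeas : ∀ i, Measurable (Y i)) (hXmeas : ∀ i, Measurable (X i))
    (hindep : iIndepFun
      (fun i ω => (Y i ω, X i ω)) (ℙ : Measure Ω))
    (hident : ∀ i, IdentDistrib (fun ω => (Y i ω, X i ω)) (fun ω => (Y 0 ω, X 0 ω))
      (ℙ : Measure Ω) (ℙ : Measure Ω))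
    (hYatomless : ∀ c : ℝ, (ℙ : Measure Ω) {ω | Y 0 ω = c} = 0)
    (t : ℝ) (ht : t ∈ Set.Icc (0 : ℝ) 1)
    (hXatomless : ∀ c : ℝ, (ℙ : Measure Ω) {ω | X 0 ω t = c} = 0)
    -- the conditional concordance probability `V i (t)`, centered by `0.5`
    (V : ℕ → Ω → ℝ)
    (hV : ∀ i ω, V i ω =
      (∫ ω', concord (Y i ω - Y 0 ω') (X i ω t - X 0 ω' t) ∂(ℙ : Measure Ω)) - 0.5)
    -- its empirical counterpart `W n i (t)`
    (W : ℕ → ℕ → Ω → ℝ)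
    (hW : ∀ n i ω, W n i ω =
      (n : ℝ)⁻¹ * ∑ j ∈ Finset.range n,
        concord (Y i ω - Y j ω) (X i ω t - X j ω t) - 0.5) :
    ∀ᵐ ω ∂(ℙ : Measure Ω),
      Tendsto (fun n => ⨆ i ∈ Finset.range n, |V i ω - W n i ω|) atTop (𝓝 0) := by
  have hφ : Measurable (Prod.map id fun x => x t : ℝ × (ℝ → ℝ) → ℝ × ℝ) := by fun_prop
  exact sup_abs_V_sub_W_tendsto_zero_ae_general
    (fun i j hij => (hindep.indepFun hij).comp hφ hφ) (fun i => (hident i).comp hφ) hV hW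
end

section
/- Let H be a real separable Hilbert space, let c > 0, and let v_1, ..., v_n and w_1, ..., w_n be elements of H with ||v_i|| <= c and ||w_i|| <= c for all i. Define the operators C_v(x) = n^{-1} * sum over i = 1..n of <v_i, x> v_i and C_w(x) = n^{-1} * sum over i = 1..n of <w_i, x> w_i. Then C_v - C_w is Hilbert-Schmidt and its Hilbert-Schmidt norm satisfies ||C_v - C_w||_S <= 2c * max over 1 <= i <= n of ||v_i - w_i||. -/
open scoped RealInnerProductSpace

/-!
The Hilbert–Schmidt norm along `e` is the `ℓ²` norm of the column sequence `k ↦ T (e k)`, so it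
inherits the triangle inequality. By Bessel's inequality the rank-one operator `x ↦ ⟪b, x⟫ a` has
norm at most `‖a‖ ‖b‖`. Splitting
`⟪v, x⟫ v - ⟪w, x⟫ w = ⟪v, x⟫ (v - w) + ⟪v - w, x⟫ w`
bounds each summand of `C_v - C_w` by `2 c ‖v i - w i‖`, and an average is at most its largest term.
-/

section Average

variable {𝕜 V κ : Type*} [RCLike 𝕜] [AddCommGroup V] [Module 𝕜 V] [Fintype κ] [Nonempty κ]

theorem seminorm_average_le (p : Seminorm 𝕜 V) {f : κ → V} {r : ℝ} (hf : ∀ i, p (f i) ≤ r) :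
    p ((Fintype.card κ : 𝕜)⁻¹ • ∑ i, f i) ≤ r := by
  have hcard : (0 : ℝ) < Fintype.card κ := mod_cast Fintype.card_pos
  rw [map_smul_eq_mul, norm_inv, RCLike.norm_natCast, inv_mul_le_iff₀ hcard]
  calc p (∑ i, f i) ≤ ∑ i, p (f i) :=
        Finset.le_sum_of_subadditive p (map_zero p).le (map_add_le_add p) _ _
    _ ≤ Fintype.card κ • r := Finset.sum_le_card_nsmul _ _ _ fun i _ => hf i
    _ = Fintype.card κ * r := nsmul_eq_mul _ _

end Average

section HilbertSchmidt

variable {𝕜 E F ι : Type*} [NontriviallyNormedField 𝕜]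
  [SeminormedAddCommGroup E] [NormedSpace 𝕜 E] [NormedAddCommGroup F] [NormedSpace 𝕜 F]

variable (𝕜 F) in
/-- The bounded operators whose columns along `e` are square summable. When `e` is a Hilbert basis
these are the Hilbert–Schmidt operators; arbitrary families `e` are allowed. -/
def hilbertSchmidt (e : ι → E) : Submodule 𝕜 (E →L[𝕜] F) where
  carrier := {T | Memℓp (fun k => T (e k)) 2}
  zero_mem' := zero_memℓp
  add_mem' hS hT := hS.add hT
  smul_mem' c _ hT := hT.const_smul c

theorem mem_hilbertSchmidt {e : ι → E} {T : E →L[𝕜] F} :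
    T ∈ hilbertSchmidt 𝕜 F e ↔ Summable fun k => ‖T (e k)‖ ^ 2 := by
  change Memℓp (fun k => T (e k)) 2 ↔ _
  simp [memℓp_gen_iff]

/-- The columns along `e` of an operator in `hilbertSchmidt 𝕜 F e`, as an element of `ℓ²`; this
embedding transports the `ℓ²` norm to operators. -/
def hilbertSchmidtColumns (e : ι → E) : hilbertSchmidt 𝕜 F e →ₗ[𝕜] lp (fun _ : ι => F) 2 where
  toFun T := ⟨fun k => T.1 (e k), T.2⟩
  map_add' _ _ := rfl
  map_smul' _ _ := rfl

theorem hilbertSchmidtColumns_apply (e : ι → E) (T : hilbertSchmidt 𝕜 F e) (k : ι) :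
    hilbertSchmidtColumns e T k = (T : E →L[𝕜] F) (e k) :=
  rfl

/-- The Hilbert–Schmidt norm computed along `e`. It is only a seminorm because `e` need not span a
dense subspace. -/
noncomputable def hilbertSchmidtSeminorm (e : ι → E) : Seminorm 𝕜 (hilbertSchmidt 𝕜 F e) :=
  (normSeminorm 𝕜 (lp (fun _ : ι => F) 2)).comp (hilbertSchmidtColumns e)

theorem hilbertSchmidtSeminorm_apply (e : ι → E) (T : hilbertSchmidt 𝕜 F e) :
    hilbertSchmidtSeminorm e T = √(∑' k, ‖(T : E →L[𝕜] F) (e k)‖ ^ 2) := by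
  change ‖hilbertSchmidtColumns e T‖ = _
  rw [lp.norm_eq_tsum_rpow (by norm_num), Real.sqrt_eq_rpow]
  simp [hilbertSchmidtColumns_apply]

end HilbertSchmidt

section RankOne

open InnerProductSpace (rankOne rankOne_apply)

variable {𝕜 E F ι : Type*} [RCLike 𝕜] [SeminormedAddCommGroup E] [InnerProductSpace 𝕜 E]
  [NormedAddCommGroup F] [NormedSpace 𝕜 F] {e : ι → E}

theorem norm_rankOne_apply_sq (a : F) (b x : E) :
    ‖rankOne 𝕜 a b x‖ ^ 2 = ‖inner 𝕜 x b‖ ^ 2 * ‖a‖ ^ 2 := by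
  rw [rankOne_apply, norm_smul, mul_pow, norm_inner_symm]

theorem rankOne_mem_hilbertSchmidt (he : Orthonormal 𝕜 e) (a : F) (b : E) :
    rankOne 𝕜 a b ∈ hilbertSchmidt 𝕜 F e := by
  simp only [mem_hilbertSchmidt, norm_rankOne_apply_sq]
  exact (he.inner_products_summable b).mul_right _

theorem hilbertSchmidtSeminorm_rankOne_le (he : Orthonormal 𝕜 e) (a : F) (b : E) :
    hilbertSchmidtSeminorm e ⟨rankOne 𝕜 a b, rankOne_mem_hilbertSchmidt he a b⟩ ≤ ‖a‖ * ‖b‖ := by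
  rw [hilbertSchmidtSeminorm_apply]
  refine Real.sqrt_le_iff.mpr ⟨by positivity, ?_⟩
  calc ∑' k, ‖rankOne 𝕜 a b (e k)‖ ^ 2
      = (∑' k, ‖inner 𝕜 (e k) b‖ ^ 2) * ‖a‖ ^ 2 := by
        simp only [norm_rankOne_apply_sq, tsum_mul_right]
    _ ≤ ‖b‖ ^ 2 * ‖a‖ ^ 2 := by gcongr; exact he.tsum_inner_products_le b
    _ = (‖a‖ * ‖b‖) ^ 2 := by ring

end RankOne

section Covariance

open InnerProductSpace (rankOne)

variable {𝕜 E ι κ : Type*} [RCLike 𝕜] [NormedAddCommGroup E] [InnerProductSpace 𝕜 E] {e : ι → E}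

theorem rankOne_self_sub_rankOne_self (v w : E) :
    rankOne 𝕜 v v - rankOne 𝕜 w w = rankOne 𝕜 (v - w) v + rankOne 𝕜 w (v - w) := by
  simp only [map_sub, sub_apply]
  abel

theorem rankOne_self_sub_mem_hilbertSchmidt (he : Orthonormal 𝕜 e) (v w : E) :
    rankOne 𝕜 v v - rankOne 𝕜 w w ∈ hilbertSchmidt 𝕜 E e :=
  sub_mem (rankOne_mem_hilbertSchmidt he v v) (rankOne_mem_hilbertSchmidt he w w)

theorem hilbertSchmidtSeminorm_rankOne_self_sub_le (he : Orthonormal 𝕜 e) (v w : E) :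
    hilbertSchmidtSeminorm e ⟨_, rankOne_self_sub_mem_hilbertSchmidt he v w⟩ ≤
      (‖v‖ + ‖w‖) * ‖v - w‖ := by
  let R (a b : E) : hilbertSchmidt 𝕜 E e := ⟨rankOne 𝕜 a b, rankOne_mem_hilbertSchmidt he a b⟩
  calc hilbertSchmidtSeminorm e ⟨_, rankOne_self_sub_mem_hilbertSchmidt he v w⟩
      = hilbertSchmidtSeminorm e (R (v - w) v + R w (v - w)) :=
        congrArg _ (Subtype.ext (rankOne_self_sub_rankOne_self v w))
    _ ≤ hilbertSchmidtSeminorm e (R (v - w) v) + hilbertSchmidtSeminorm e (R w (v - w)) :=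
        map_add_le_add _ _ _
    _ ≤ ‖v - w‖ * ‖v‖ + ‖w‖ * ‖v - w‖ :=
        add_le_add (hilbertSchmidtSeminorm_rankOne_le he _ _)
          (hilbertSchmidtSeminorm_rankOne_le he _ _)
    _ = (‖v‖ + ‖w‖) * ‖v - w‖ := by ring

variable [Fintype κ]

variable (𝕜) in
/-- The uncentred empirical covariance operator `x ↦ n⁻¹ ∑ᵢ ⟪v i, x⟫ v i` of a finite sample `v`
of size `n`. -/
noncomputable def empiricalCovariance (v : κ → E) : E →L[𝕜] E :=
  (Fintype.card κ : 𝕜)⁻¹ • ∑ i, rankOne 𝕜 (v i) (v i)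

theorem empiricalCovariance_sub (v w : κ → E) :
    empiricalCovariance 𝕜 v - empiricalCovariance 𝕜 w =
      (Fintype.card κ : 𝕜)⁻¹ • ∑ i, (rankOne 𝕜 (v i) (v i) - rankOne 𝕜 (w i) (w i)) := by
  rw [empiricalCovariance, empiricalCovariance, ← smul_sub, Finset.sum_sub_distrib]

theorem hilbertSchmidt_norm_diff_cov_le_general [Nonempty κ] (he : Orthonormal 𝕜 e) {c : ℝ}
    {v w : κ → E} (hv : ∀ i, ‖v i‖ ≤ c) (hw : ∀ i, ‖w i‖ ≤ c) :
    Summable (fun k => ‖empiricalCovariance 𝕜 v (e k) - empiricalCovariance 𝕜 w (e k)‖ ^ 2) ∧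
      √(∑' k, ‖empiricalCovariance 𝕜 v (e k) - empiricalCovariance 𝕜 w (e k)‖ ^ 2) ≤
        2 * c * ⨆ i, ‖v i - w i‖ := by
  let D (i : κ) : hilbertSchmidt 𝕜 E e := ⟨_, rankOne_self_sub_mem_hilbertSchmidt he (v i) (w i)⟩
  let T : hilbertSchmidt 𝕜 E e := (Fintype.card κ : 𝕜)⁻¹ • ∑ i, D i
  have hT : (T : E →L[𝕜] E) = empiricalCovariance 𝕜 v - empiricalCovariance 𝕜 w := by
    simp [T, D, empiricalCovariance_sub]
  have hD (i : κ) : hilbertSchmidtSeminorm e (D i) ≤ 2 * c * ⨆ j, ‖v j - w j‖ :=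
    calc hilbertSchmidtSeminorm e (D i)
        ≤ (‖v i‖ + ‖w i‖) * ‖v i - w i‖ :=
          hilbertSchmidtSeminorm_rankOne_self_sub_le he (v i) (w i)
      _ ≤ 2 * c * ⨆ j, ‖v j - w j‖ := by
          gcongr
          · linarith [norm_nonneg (v i), hv i]
          · linarith [hv i, hw i]
          · exact le_ciSup (Finite.bddAbove_range fun j => ‖v j - w j‖) i
  have hsummable := mem_hilbertSchmidt.mp T.2
  have hnorm := seminorm_average_le (𝕜 := 𝕜) (hilbertSchmidtSeminorm e) hD
  rw [hilbertSchmidtSeminorm_apply] at hnorm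
  simp only [← sub_apply, ← hT]
  exact ⟨hsummable, hnorm⟩

end Covariance

/-- For vectors `v i`, `w i` in a real separable Hilbert space `H` with
`‖v i‖ ≤ c` and `‖w i‖ ≤ c`, the difference of the empirical covariance-type operators
`C_v x = n⁻¹ ∑ᵢ ⟪v i, x⟫ v i` and `C_w x = n⁻¹ ∑ᵢ ⟪w i, x⟫ w i` is Hilbert–Schmidt and
its Hilbert–Schmidt norm (computed in the orthonormal basis `e`) is bounded by
`2 c * max ᵢ ‖v i - w i‖`. -/
theorem hilbertSchmidt_norm_diff_cov_le
    {H : Type*} [NormedAddCommGroup H] [InnerProductSpace ℝ H] [CompleteSpace H]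
    (e : HilbertBasis ℕ ℝ H)
    (n : ℕ) (hn : 0 < n) (c : ℝ) (hc : 0 < c)
    (v w : Fin n → H)
    (hv : ∀ i, ‖v i‖ ≤ c) (hw : ∀ i, ‖w i‖ ≤ c)
    (Cv Cw : H → H)
    (hCv : ∀ x, Cv x = (n : ℝ)⁻¹ • ∑ i, ⟪v i, x⟫ • v i)
    (hCw : ∀ x, Cw x = (n : ℝ)⁻¹ • ∑ i, ⟪w i, x⟫ • w i) :
    Summable (fun k => ‖Cv (e k) - Cw (e k)‖ ^ 2) ∧
      Real.sqrt (∑' k, ‖Cv (e k) - Cw (e k)‖ ^ 2) ≤ 2 * c * ⨆ i, ‖v i - w i‖ := by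
  obtain rfl : Cv = empiricalCovariance ℝ v :=
    funext fun x => by simp [hCv, empiricalCovariance]
  obtain rfl : Cw = empiricalCovariance ℝ w :=
    funext fun x => by simp [hCw, empiricalCovariance]
  have : NeZero n := ⟨hn.ne'⟩
  exact hilbertSchmidt_norm_diff_cov_le_general e.orthonormal hv hw
end
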